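/- Let w ∈ S_n have full support. Suppose that for every left descent s of w, either s does not lie in the support of sw, or sw = ws; and for every right descent s of w, either s does not lie in the support of ws, or sw = ws. Then w is a Coxeter element of S_n. -/

import Mathlib

/-- The support of `w`: the set of simple reflection indices appearing in some
(equivalently, any) reduced word for `w`. -/
def CoxeterSystem.supp {B W : Type*} [Group W] {M : CoxeterMatrix B}
    (cs : CoxeterSystem M W) (w : W) : Set B :=
  { i | ∃ ω : List B, cs.IsReduced ω ∧ cs.wordProd ω = w ∧ i ∈ ω }

theorem aux_swap {m : ℕ} (i : Fin m) (x : Fin (m+1)) :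
    ((Equiv.swap i.castSucc i.succ) x).val =
      if x.val = i.val then i.val + 1 else if x.val = i.val + 1 then i.val else x.val := by
  rw [Equiv.swap_apply_def]
  simp only [Fin.ext_iff, Fin.val_castSucc, Fin.val_succ]
  split_ifs <;> simp

theorem aux_exch {m : ℕ}
    (cs : CoxeterSystem (CoxeterMatrix.Aₙ m) (Equiv.Perm (Fin (m + 1))))
    (hs : ∀ i : Fin m, cs.simple i = Equiv.swap i.castSucc i.succ) (i : Fin m)
    (ω : List (Fin m)) (h : cs.wordProd ω i.succ < cs.wordProd ω i.castSucc) :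
    ∃ ω' : List (Fin m), ω'.length + 1 = ω.length ∧
      cs.wordProd ω' = cs.wordProd ω * cs.simple i := by
  induction ω with
  | nil =>
    simp only [CoxeterSystem.wordProd_nil, Equiv.Perm.one_apply, Fin.lt_def,
      Fin.val_castSucc, Fin.val_succ] at h
    omega
  | cons a ω ih =>
    by_cases h' : cs.wordProd ω i.succ < cs.wordProd ω i.castSucc
    · obtain ⟨ω', h1, h2⟩ := ih h'
      exact ⟨a :: ω', by simp [h1], by rw [cs.wordProd_cons, cs.wordProd_cons, h2, mul_assoc]⟩
    · refine ⟨ω, by simp, ?_⟩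
      have hne : cs.wordProd ω i.succ ≠ cs.wordProd ω i.castSucc := by
        intro hh
        have := congrArg Fin.val ((cs.wordProd ω).injective hh)
        simp at this
      rw [cs.wordProd_cons, Equiv.Perm.mul_apply, Equiv.Perm.mul_apply, hs, Fin.lt_def,
        aux_swap, aux_swap] at h
      rw [Fin.lt_def] at h'
      have hne' : (cs.wordProd ω i.succ).val ≠ (cs.wordProd ω i.castSucc).val :=
        fun hh => hne (Fin.ext hh)
      have e1 : (cs.wordProd ω i.castSucc).val = a.val := by grind
      have e2 : (cs.wordProd ω i.succ).val = a.val + 1 := by grind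
      have e1' : cs.wordProd ω i.castSucc = a.castSucc := Fin.ext (by simp [e1])
      have e2' : cs.wordProd ω i.succ = a.succ := Fin.ext (by simp [e2])
      have key : cs.simple a * cs.wordProd ω = cs.wordProd ω * cs.simple i := by
        rw [hs, hs, ← e1', ← e2', Equiv.mul_swap_eq_swap_mul]
      rw [cs.wordProd_cons, key, mul_assoc, cs.simple_mul_simple_self, mul_one]

theorem aux_desc {m : ℕ}
    (cs : CoxeterSystem (CoxeterMatrix.Aₙ m) (Equiv.Perm (Fin (m + 1))))
    (hs : ∀ i : Fin m, cs.simple i = Equiv.swap i.castSucc i.succ) (i : Fin m)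
    (w : Equiv.Perm (Fin (m + 1))) : cs.IsRightDescent w i ↔ w i.succ < w i.castSucc := by
  have main : ∀ w : Equiv.Perm (Fin (m + 1)), w i.succ < w i.castSucc →
      cs.IsRightDescent w i := by
    intro w h
    obtain ⟨ω, h1, h2⟩ := cs.exists_isReduced w
    subst h2
    obtain ⟨ω', h3, h4⟩ := aux_exch cs hs i ω h
    unfold CoxeterSystem.IsRightDescent
    rw [← h4]
    have := cs.length_wordProd_le ω'
    unfold CoxeterSystem.IsReduced at h1
    omega
  refine ⟨fun h => ?_, main w⟩
  by_contra hc
  have hne : w i.succ ≠ w i.castSucc := by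
    intro hh
    have := congrArg Fin.val (w.injective hh)
    simp at this
  have h2 := main (w * cs.simple i) (by
    rw [Equiv.Perm.mul_apply, Equiv.Perm.mul_apply, hs, Equiv.swap_apply_left,
      Equiv.swap_apply_right]
    exact lt_of_le_of_ne (not_lt.mp hc) hne.symm)
  unfold CoxeterSystem.IsRightDescent at h h2
  rw [mul_assoc, cs.simple_mul_simple_self, mul_one] at h2
  omega

theorem aux_notmem {m : ℕ}
    (cs : CoxeterSystem (CoxeterMatrix.Aₙ m) (Equiv.Perm (Fin (m + 1))))
    (hs : ∀ i : Fin m, cs.simple i = Equiv.swap i.castSucc i.succ) (i : Fin m)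
    (w : Equiv.Perm (Fin (m + 1))) (h : i ∉ cs.supp w) (x : Fin (m+1)) :
    (w x).val ≤ i.val ↔ x.val ≤ i.val := by
  obtain ⟨ω, h1, h2⟩ := cs.exists_isReduced w
  have h3 : i ∉ ω := fun hh => h ⟨ω, h1, h2.symm, hh⟩
  subst h2
  clear h h1
  induction ω with
  | nil => simp
  | cons a ω ih =>
    simp only [List.mem_cons, not_or] at h3
    refine Iff.trans ?_ (ih h3.2)
    rw [cs.wordProd_cons, Equiv.Perm.mul_apply, hs, aux_swap]
    have : i.val ≠ a.val := fun hh => h3.1 (Fin.ext hh)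
    grind

theorem aux_mem {m : ℕ}
    (cs : CoxeterSystem (CoxeterMatrix.Aₙ m) (Equiv.Perm (Fin (m + 1))))
    (hs : ∀ i : Fin m, cs.simple i = Equiv.swap i.castSucc i.succ) (i : Fin m)
    (ω : List (Fin m)) (hr : cs.IsReduced ω)
    (h : ∀ x, (cs.wordProd ω x).val ≤ i.val ↔ x.val ≤ i.val) : i ∉ ω := by
  induction ω using List.reverseRecOn with
  | nil => simp
  | append_singleton ω a ih =>
    have hr' : cs.IsReduced ω := by
      have := CoxeterSystem.IsReduced.take hr ω.length
      simpa using this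
    have hp : cs.wordProd (ω ++ [a]) = cs.wordProd ω * cs.simple a := by
      rw [cs.wordProd_append, cs.wordProd_singleton]
    have hd : cs.IsRightDescent (cs.wordProd (ω ++ [a])) a := by
      unfold CoxeterSystem.IsRightDescent
      rw [hr, hp, mul_assoc, cs.simple_mul_simple_self, mul_one, hr']
      simp
    have hne : i ≠ a := by
      rintro rfl
      rw [aux_desc cs hs] at hd
      have h1 := h i.castSucc
      have h2 := h i.succ
      rw [Fin.lt_def] at hd
      simp only [Fin.val_castSucc, Fin.val_succ] at h1 h2
      omega
    have hv : i.val ≠ a.val := fun hh => hne (Fin.ext hh)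
    have := ih hr' (by
      intro x
      have e := h (cs.simple a x)
      rw [hp, Equiv.Perm.mul_apply, hs, Equiv.swap_apply_self, aux_swap] at e
      rw [e]
      grind)
    simp [this, hne]

theorem aux_step (f : ℕ → ℕ) (r s : ℕ) (hrs : r ≤ s) (h : f s < f r) :
    ∃ j, r ≤ j ∧ j < s ∧ f (j+1) < f j := by
  by_contra hc
  push Not at hc
  have : ∀ d, r + d ≤ s → f r ≤ f (r + d) := by
    intro d
    induction d with
    | zero => simp
    | succ d ih =>
      intro hd
      have := hc (r + d) (by omega) (by omega)
      have := ih (by omega)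
      rw [← add_assoc]; omega
  have := this (s - r) (by omega)
  rw [Nat.add_sub_cancel' hrs] at this
  omega

theorem aux_core (m : ℕ) (hm : 2 ≤ m) (f g : ℕ → ℕ) (hfg : ∀ x, f (g x) = x)
    (hgf : ∀ x, g (f x) = x) (hb : ∀ x, x ≤ m → f x ≤ m)
    (hfull : ∀ i, i < m → ∃ p, p ≤ i ∧ i < f p)
    (hL : ∀ j, j < m → g (j+1) < g j → g (j+1) ≤ j)
    (hR : ∀ j, j < m → f (j+1) < f j → f (j+1) ≤ j ∧ j < f j ∧
      ((∀ p, p ≤ j → j < f p → p = j) ∨ (f j = j + 1 ∧ f (j+1) = j))) :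
    (∀ x, x ≤ m → f x ≠ x) ∧
      ∀ i p q, i ≤ m → p < q → q ≤ i → i < f p → i < f q → False := by
  have nob : ∀ i, ¬ ((i ≤ m ∧ f i = i) ∨ (i + 1 ≤ m ∧ f i = i + 1 ∧ f (i+1) = i)) := by
    intro i
    induction i using Nat.strong_induction_on with
    | _ i ih =>
    intro hi
    rcases Nat.eq_zero_or_pos i with rfl | hpos
    · rcases hi with ⟨_, h0⟩ | ⟨_, h0, h1⟩
      · obtain ⟨p, hp, hp'⟩ := hfull 0 (by omega)
        have : p = 0 := by omega
        subst this; omega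
      · obtain ⟨p, hp, hp'⟩ := hfull 1 (by omega)
        have : p = 0 ∨ p = 1 := by omega
        rcases this with rfl | rfl
        · omega
        · simp at h1; omega
    · obtain ⟨j, rfl⟩ : ∃ j, i = j + 1 := ⟨i - 1, by omega⟩
      have hjm : j < m := by omega
      have hnot := ih j (by omega)
      have a1 : ¬ f (j+1) < f j := fun h => by have := (hR j hjm h).1; omega
      have a2 : f j ≠ f (j+1) := fun h => by
        have := congrArg g h; rw [hgf, hgf] at this; omega
      have a3 : f j < j := by
        have : f j ≠ j := by omega
        rcases hi with hi | hi
        · omega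
        · have : f j ≠ f (j+1+1) := fun h => by
            have := congrArg g h; rw [hgf, hgf] at this; omega
          omega
      have b1 : g (j+1) = j + 1 ∨ (g (j+1) = j + 1 + 1 ∧ f (j+1) = j+1+1) := by
        rcases hi with hi | hi
        · left; have := hgf (j+1); rw [hi.2] at this; exact this
        · right; have := hgf (j+1+1); rw [hi.2.2] at this; exact ⟨this, hi.2.1⟩
      have b2 : ¬ g (j+1) < g j := fun h => by have := hL j hjm h; omega
      have b3 : g j ≠ g (j+1) := fun h => by
        have := congrArg f h; rw [hfg, hfg] at this; omega
      have b4 : g j < j := by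
        have h1 : g j ≠ j := fun h => by have := hfg j; rw [h] at this; omega
        have h2 : g j ≠ j + 1 := fun h => by have := hfg j; rw [h] at this; omega
        omega
      obtain ⟨q, hq, hq'⟩ := hfull j hjm
      have hqj : q ≠ j := by rintro rfl; omega
      have hfp := hfg j
      have hpq : g j ≠ q := fun h => by rw [h] at hfp; omega
      generalize g j = p at *
      have hmax : f j < f (max p q) := by
        rcases max_choice p q with h | h <;> rw [h] <;> omega
      obtain ⟨k, hk1, hk2, hk3⟩ := aux_step f (max p q) j (by omega) hmax
      obtain ⟨_, _, h | h⟩ := hR k (by omega) hk3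
      · have := h p (by omega) (by omega)
        have := h q (by omega) (by omega)
        omega
      · exact ih k (by omega) (Or.inr ⟨by omega, h⟩)
  refine ⟨fun x hx h => nob x (Or.inl ⟨hx, h⟩), ?_⟩
  have hA : ∀ j, j < m → f (j+1) < f j → ∀ p, p ≤ j → j < f p → p = j := by
    intro j hj h
    obtain ⟨_, _, h | h⟩ := hR j hj h
    · exact h
    · exact absurd (Or.inr ⟨by omega, h⟩) (nob j)
  have : ∀ d i p q, i + d = m → p < q → q ≤ i → i < f p → i < f q → False := by
    intro d
    induction d with
    | zero =>
      intro i p q hi hpq hq h1 h2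
      have := hb p (by omega)
      omega
    | succ d ih =>
      intro i p q hi hpq hq h1 h2
      by_cases hfi : f i ≤ i
      · obtain ⟨k, hk1, hk2, hk3⟩ := aux_step f q i hq (by omega)
        have := hA k (by omega) hk3 p (by omega) (by omega)
        omega
      · by_cases hd : f (i+1) < f i
        · have := hA i (by omega) hd p (by omega) h1
          omega
        · have inj : ∀ a b, a ≠ b → f a ≠ f b := fun a b hab h => by
            have := congrArg g h; rw [hgf, hgf] at this; omega
          have h3 := inj i (i+1) (by omega)
          have h4 := inj p i (by omega)
          by_cases h5 : f p = i + 1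
          · exact ih (i+1) i (i+1) (by omega) (by omega) (by omega) (by omega) (by omega)
          · exact ih (i+1) p (i+1) (by omega) (by omega) (by omega) (by omega) (by omega)
  intro i p q hi
  exact this (m - i) i p q (by omega)

theorem aux_word {m : ℕ}
    (cs : CoxeterSystem (CoxeterMatrix.Aₙ m) (Equiv.Perm (Fin (m + 1))))
    (hs : ∀ i : Fin m, cs.simple i = Equiv.swap i.castSucc i.succ) (k : ℕ) (hk : k ≤ m) :
    ∀ w : Equiv.Perm (Fin (m + 1)), (∀ x, k < x.val → w x = x) →
      (0 < k → ∀ x, x.val ≤ k → w x ≠ x) →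
      (∀ i < k, ∃ p, p.val ≤ i ∧ i < (w p).val) →
      (∀ i < k, ∀ p q, p.val ≤ i → q.val ≤ i → i < (w p).val → i < (w q).val → p = q) →
      ∃ ω : List (Fin m), ω.Nodup ∧ (∀ i : Fin m, i ∈ ω ↔ i.val < k) ∧ w = cs.wordProd ω := by
  induction k with
  | zero =>
    intro w h1 _ _ _
    refine ⟨[], by simp, by simp, ?_⟩
    rw [cs.wordProd_nil]
    have hp : ∀ x : Fin (m+1), x ≠ 0 → w x = x := fun x hx => h1 x (by
      rcases Nat.eq_zero_or_pos x.val with h | h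
      · exact absurd (Fin.ext (by simpa using h)) hx
      · exact h)
    ext x
    by_cases hx : x = 0
    · subst hx
      by_cases h0 : w 0 = 0
      · simp [h0]
      · exact absurd (w.injective (hp _ h0)) h0
    · simp [hp x hx]
  | succ k ih =>
    intro w h1 h2 h3 h4
    have h2 := h2 (by omega)
    set a : Fin m := ⟨k, by omega⟩ with ha
    have hac : a.castSucc.val = k := rfl
    have has : a.succ.val = k + 1 := rfl
    have hle : ∀ x, x.val ≤ k + 1 → (w x).val ≤ k + 1 := by
      intro x hx
      by_contra hc
      have := w.injective (h1 (w x) (by omega))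
      rw [this] at hc
      omega
    have hinj : ∀ x y, (w x).val = (w y).val → x = y := fun x y h => w.injective (Fin.ext h)
    have hnf : ∀ x, x.val ≤ k + 1 → (w x).val ≠ x.val := fun x hx h => h2 x hx (Fin.ext h)
    have hsurj : ∀ y, ∃ x, w x = y := w.surjective
    by_cases hc : (w a.castSucc).val = k + 1
    · obtain ⟨ω, n1, n2, n3⟩ := ih (by omega) (w * cs.simple a) (by
        intro x hx
        rw [Equiv.Perm.mul_apply]
        by_cases hx' : x.val = k + 1
        · have : x = a.succ := Fin.ext hx'
          subst this
          rw [hs, Equiv.swap_apply_right]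
          exact Fin.ext hc
        · rw [hs, Equiv.swap_apply_of_ne_of_ne]
          · exact h1 x (by omega)
          · intro h; subst h; omega
          · intro h; subst h; omega) (by
        intro hk0 x hx
        rw [Equiv.Perm.mul_apply]
        by_cases hx' : x.val = k
        · have : x = a.castSucc := Fin.ext hx'
          subst this
          rw [hs, Equiv.swap_apply_left]
          intro hh
          obtain ⟨p, hp1, hp2⟩ := h3 (k - 1) (by omega)
          have q1 := hle p (by omega)
          have q2 : (w p).val = k ∨ (w p).val = k + 1 := by omega
          rcases q2 with q2 | q2
          · have := hinj p a.succ (by rw [q2, hh, hac])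
            subst this; omega
          · have := hinj p a.castSucc (by rw [q2, hc])
            subst this; omega
        · rw [hs, Equiv.swap_apply_of_ne_of_ne]
          · exact h2 x (by omega)
          · intro h; subst h; omega
          · intro h; subst h; omega) (by
        intro i hi
        obtain ⟨p, hp1, hp2⟩ := h3 i (by omega)
        refine ⟨p, hp1, ?_⟩
        rw [Equiv.Perm.mul_apply, hs, Equiv.swap_apply_of_ne_of_ne]
        · exact hp2
        · intro h; subst h; omega
        · intro h; subst h; omega) (by
        intro i hi p q hp hq hp' hq'
        rw [Equiv.Perm.mul_apply, hs, Equiv.swap_apply_of_ne_of_ne (by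
          intro h; subst h; omega) (by intro h; subst h; omega)] at hp' hq'
        exact h4 i (by omega) p q hp hq hp' hq')
      refine ⟨ω ++ [a], ?_, ?_, ?_⟩
      · rw [List.nodup_append]
        refine ⟨n1, by simp, ?_⟩
        intro x hx y hy hxy
        simp at hy
        have := (n2 x).1 hx
        rw [hxy, hy] at this
        simp [ha] at this
      · intro i
        simp only [List.mem_append, List.mem_singleton, n2, Fin.ext_iff, ha]
        omega
      · rw [cs.wordProd_append, cs.wordProd_singleton, ← n3, mul_assoc,
          cs.simple_mul_simple_self, mul_one]
    · have hlt : (w a.castSucc).val < k := by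
        have := hle a.castSucc (by omega)
        have := hnf a.castSucc (by omega)
        omega
      have htop : ∀ x, (w x).val ≤ k + 1 → x.val ≤ k + 1 := by
        intro x hx
        by_contra hcc
        rw [h1 x (by omega)] at hx
        omega
      have hck : (w a.succ).val = k := by
        obtain ⟨x, hx⟩ := hsurj a.castSucc
        obtain ⟨y, hy⟩ := hsurj a.succ
        have hx := congrArg Fin.val hx
        have hy := congrArg Fin.val hy
        have x1 := htop x (by omega)
        have y1 := htop y (by omega)
        have x2 := hnf x x1
        have y2 := hnf y y1
        by_cases hxk : x.val = k + 1
        · have : x = a.succ := Fin.ext hxk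
          subst this; omega
        · have hyk : y.val ≠ k := fun h => by
            have : y = a.castSucc := Fin.ext h
            subst this; omega
          have := h4 (k-1) (by omega) x y (by omega) (by omega) (by omega) (by omega)
          subst this; omega
      have hval : ∀ x, ((cs.simple a * w) x).val = if (w x).val = k then k + 1 else
          if (w x).val = k + 1 then k else (w x).val := by
        intro x
        rw [Equiv.Perm.mul_apply, hs, aux_swap]
      obtain ⟨ω, n1, n2, n3⟩ := ih (by omega) (cs.simple a * w) (by
        intro x hx
        apply Fin.ext
        rw [hval]
        by_cases hx' : x.val = k + 1
        · have : x = a.succ := Fin.ext hx'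
          subst this
          rw [if_pos hck]; omega
        · have := congrArg Fin.val (h1 x (by omega))
          rw [if_neg (by omega), if_neg (by omega)]; exact this) (by
        intro hk0 x hx hh
        have hh := congrArg Fin.val hh
        rw [hval] at hh
        have := hnf x (by omega)
        by_cases hx' : x.val = k
        · have : x = a.castSucc := Fin.ext hx'
          subst this
          split_ifs at hh <;> omega
        · split_ifs at hh <;> omega) (by
        intro i hi
        obtain ⟨p, hp1, hp2⟩ := h3 i (by omega)
        refine ⟨p, hp1, ?_⟩
        rw [hval]
        split_ifs <;> omega) (by
        intro i hi p q hp hq hp' hq'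
        rw [hval] at hp' hq'
        exact h4 i (by omega) p q hp hq (by split_ifs at hp' <;> omega)
          (by split_ifs at hq' <;> omega))
      refine ⟨a :: ω, ?_, ?_, ?_⟩
      · rw [List.nodup_cons]
        refine ⟨?_, n1⟩
        rw [n2]; simp [ha]
      · intro i
        simp only [List.mem_cons, n2, Fin.ext_iff, ha]
        omega
      · rw [cs.wordProd_cons, ← n3, ← mul_assoc,
          cs.simple_mul_simple_self, one_mul]

/-- Let `w ∈ S_n` have full support.  If for every left descent `s` of `w` either
`s ∉ Supp(sw)` or `sw = ws`, and for every right descent `s` of `w` either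
`s ∉ Supp(ws)` or `sw = ws`, then `w` is a Coxeter element. -/
theorem stmt_9 {m : ℕ}
    (cs : CoxeterSystem (CoxeterMatrix.Aₙ m) (Equiv.Perm (Fin (m + 1))))
    (hs : ∀ i : Fin m, cs.simple i = Equiv.swap i.castSucc i.succ)
    (w : Equiv.Perm (Fin (m + 1)))
    (hfull : cs.supp w = Set.univ)
    (hL : ∀ i : Fin m, cs.IsLeftDescent w i →
      i ∉ cs.supp (cs.simple i * w) ∨ cs.simple i * w = w * cs.simple i)
    (hR : ∀ i : Fin m, cs.IsRightDescent w i →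
      i ∉ cs.supp (w * cs.simple i) ∨ cs.simple i * w = w * cs.simple i) :
    ∃ ω : List (Fin m), ω.Nodup ∧ (∀ i : Fin m, i ∈ ω) ∧ w = cs.wordProd ω := by
  have hF : ∀ i : Fin m, ∃ p, p.val ≤ i.val ∧ i.val < (w p).val := by
    intro i
    by_contra hc
    push Not at hc
    have hi : i ∈ cs.supp w := by rw [hfull]; trivial
    obtain ⟨ω, r1, r2, r3⟩ := hi
    refine aux_mem cs hs i ω r1 ?_ r3
    rw [r2]
    have hsub : (Finset.univ.filter fun x : Fin (m+1) => x.val ≤ i.val).map w.toEmbedding =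
        (Finset.univ.filter fun x : Fin (m+1) => x.val ≤ i.val) := by
      apply Finset.eq_of_subset_of_card_le
      · intro y hy
        simp only [Finset.mem_map, Finset.mem_filter, Finset.mem_univ, true_and] at hy ⊢
        obtain ⟨x, hx, rfl⟩ := hy
        exact hc x hx
      · rw [Finset.card_map]
    intro x
    refine ⟨fun h => ?_, hc x⟩
    have : w x ∈ (Finset.univ.filter fun x : Fin (m+1) => x.val ≤ i.val) := by simpa using h
    rw [← hsub] at this
    simpa using this
  have hcomm : ∀ i : Fin m, cs.simple i * w = w * cs.simple i →
      (w i.castSucc).val = i.val ∧ (w i.succ).val = i.val + 1 ∨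
      (w i.castSucc).val = i.val + 1 ∧ (w i.succ).val = i.val := by
    intro i h
    have h1 := congrArg Fin.val (congrArg (fun v => v i.castSucc) h)
    simp only [Equiv.Perm.mul_apply, hs, aux_swap, Equiv.swap_apply_left] at h1
    have : (w i.castSucc).val ≠ (w i.succ).val := by
      intro hh
      have := congrArg Fin.val (w.injective (Fin.ext hh))
      simp at this
    grind
  have hR' : ∀ i : Fin m, (w i.succ).val < (w i.castSucc).val →
      (w i.succ).val ≤ i.val ∧ i.val < (w i.castSucc).val ∧
      ((∀ p : Fin (m+1), p.val ≤ i.val → i.val < (w p).val → p.val = i.val) ∨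
        ((w i.castSucc).val = i.val + 1 ∧ (w i.succ).val = i.val)) := by
    intro i hi
    rcases hR i ((aux_desc cs hs i w).2 hi) with h | h
    · have h := aux_notmem cs hs i _ h
      have e1 := h i.castSucc
      have e2 := h i.succ
      simp only [Equiv.Perm.mul_apply, hs, Equiv.swap_apply_left, Equiv.swap_apply_right,
        Fin.val_castSucc, Fin.val_succ] at e1 e2
      refine ⟨by omega, by omega, Or.inl ?_⟩
      intro p hp hp'
      by_contra hne
      have e3 := h p
      rw [Equiv.Perm.mul_apply, hs, Equiv.swap_apply_of_ne_of_ne (by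
        intro h; subst h; simp at hne) (by intro h; subst h; simp at hp)] at e3
      omega
    · have := hcomm i h
      omega
  have hL' : ∀ i : Fin m, (w⁻¹ i.succ).val < (w⁻¹ i.castSucc).val →
      (w⁻¹ i.succ).val ≤ i.val := by
    intro i hi
    have hd : cs.IsLeftDescent w i := by
      rw [← cs.isRightDescent_inv_iff, aux_desc cs hs]
      exact hi
    rcases hL i hd with h | h
    · have h := aux_notmem cs hs i _ h (w⁻¹ i.succ)
      simp [hs] at h
      exact h
    · rcases hcomm i h with ⟨h1, h2⟩ | ⟨h1, h2⟩
      · have e1 : w i.castSucc = i.castSucc := Fin.ext h1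
        have e2 : w i.succ = i.succ := Fin.ext h2
        rw [← Equiv.Perm.eq_inv_iff_eq] at e1 e2
        rw [← e1, ← e2] at hi
        simp at hi
      · have e1 : w i.castSucc = i.succ := Fin.ext h1
        rw [← Equiv.Perm.eq_inv_iff_eq] at e1
        rw [← e1]; simp
  rcases Nat.lt_or_ge m 2 with hm | hm
  · obtain ⟨ω, a1, a2, a3⟩ := aux_word cs hs m le_rfl w (by intro x hx; omega) (by
      intro h0 x hx hh
      have : m = 1 := by omega
      subst this
      obtain ⟨p, hp1, hp2⟩ := hF 0
      have hh := congrArg Fin.val hh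
      have hinj : ∀ a b, (w a).val = (w b).val → a.val = b.val :=
        fun a b h => congrArg Fin.val (w.injective (Fin.ext h))
      have := hinj p x
      have hc : p.val = x.val → (w p).val = (w x).val := fun h => by rw [Fin.ext h]
      have hwp := (w p).is_lt
      have hx2 := x.is_lt
      have hz : ((0 : Fin 1)).val = 0 := rfl
      rw [hz] at hp1 hp2
      omega) (fun i hi => hF ⟨i, hi⟩) (by
      intro i hi p q hp hq _ _
      apply Fin.ext; omega)
    exact ⟨ω, a1, fun i => (a2 i).2 i.2, a3⟩
  · let ext : Equiv.Perm (Fin (m+1)) → ℕ → ℕ := fun v x =>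
      if h : x < m + 1 then (v ⟨x, h⟩).val else x
    have ev : ∀ v (x : ℕ) (h : x < m + 1), ext v x = (v ⟨x, h⟩).val := by
      intro v x h; exact dif_pos h
    have einv : ∀ v u : Equiv.Perm (Fin (m+1)), (∀ x, v (u x) = x) →
        ∀ x, ext v (ext u x) = x := by
      intro v u huv x
      by_cases h : x < m + 1
      · rw [ev u x h, ev v _ (Fin.is_lt _)]
        simp [huv]
      · have e : ∀ v, ext v x = x := fun v => dif_neg h
        rw [e, e]
    obtain ⟨c1, c2⟩ := aux_core m hm (ext w) (ext w⁻¹) (einv _ _ (by simp)) (einv _ _ (by simp))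
      (by intro x hx; rw [ev w x (by omega)]; omega)
      (by
        intro i hi
        obtain ⟨p, hp, hp'⟩ := hF ⟨i, hi⟩
        exact ⟨p.val, hp, by rw [ev w p.val p.2]; exact hp'⟩)
      (by
        intro j hj h
        rw [ev _ j (by omega), ev _ (j+1) (by omega)] at h
        rw [ev _ (j+1) (by omega)]
        exact hL' ⟨j, hj⟩ h)
      (by
        intro j hj h
        rw [ev _ j (by omega), ev _ (j+1) (by omega)] at h
        rw [ev _ j (by omega), ev _ (j+1) (by omega)]
        obtain ⟨d1, d2, d3⟩ := hR' ⟨j, hj⟩ h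
        refine ⟨d1, d2, d3.imp (fun d p hp hp' => ?_) id⟩
        rw [ev _ p (by omega)] at hp'
        exact d ⟨p, by omega⟩ hp hp')
    obtain ⟨ω, a1, a2, a3⟩ := aux_word cs hs m le_rfl w (by intro x hx; omega) (by
      intro _ x hx hh
      apply c1 x.val hx
      rw [ev w _ x.2]
      exact congrArg Fin.val hh) (fun i hi => hF ⟨i, hi⟩) (by
      intro i hi p q hp hq hp' hq'
      have hp'' : i < ext w p.val := by rw [ev w _ p.2]; exact hp'
      have hq'' : i < ext w q.val := by rw [ev w _ q.2]; exact hq'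
      rcases lt_trichotomy p.val q.val with h | h | h
      · exact (c2 i _ _ hi.le h hq hp'' hq'').elim
      · exact Fin.ext h
      · exact (c2 i _ _ hi.le h hp hq'' hp'').elim)
    exact ⟨ω, a1, fun i => (a2 i).2 i.2, a3⟩
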